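/- Let R be a commutative ring, A a commutative R-algebra, I an ideal of A, and f : A → A' an R-algebra homomorphism which is I-adically étale (i.e. A'/I^nA' is étale over A/I^n for every n ≥ 1) and such that A' is IA'-adically complete and separated. Let α ∈ A be I-adically nilpotent (for every n ≥ 1 there is k with α^k ∈ I^n). Then every α-derivation ∂ of A over R extends uniquely along f to an f(α)-derivation ∂' of A' over R, i.e. there exists a unique f(α)-derivation ∂' of A' over R with ∂'∘f = f∘∂. -/

import Mathlib

/-- An `α`-derivation of a commutative `R`-algebra `A` over `R`. -/
structure AlphaDerivation (R A : Type*) [CommRing R] [CommRing A] [Algebra R A]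
    (α : A) where
  toFun : A → A
  map_add' : ∀ x y : A, toFun (x + y) = toFun x + toFun y
  map_smul' : ∀ (r : R) (x : A), toFun (r • x) = r • toFun x
  map_one' : toFun 1 = 0
  leibniz' : ∀ x y : A, toFun (x * y) =
    toFun x * y + x * toFun y + α * (toFun x * toFun y)

universe u

/-!
An `α`-derivation `∂` of `A` is the same thing as an `R`-algebra section `x ↦ x + ∂(x) ω` of the
projection `A[ω] / (ω² - α ω) → A`. Extending `∂` along `f : A → A'` thus amounts to lifting the
identity of `A'` through `A'[ω] → A'`, compatibly with the map `A → A'[ω]` determined by `∂`. As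
`ωᵏ⁺¹ = αᵏ ω` and `α` is `I`-adically nilpotent, the kernel `(ω)` becomes nilpotent modulo every
power of `I`, so étaleness gives unique compatible lifts modulo these powers; since `A'[ω]` is
finite free over `A'`, it is complete and the lifts glue.
-/

open Function

section FormallyEtale

variable {A A' B C : Type*} [CommRing A] [CommRing A'] [CommRing B] [CommRing C]

theorem existsUnique_lift_of_formallyEtale {f : A →+* A'} (hf : f.FormallyEtale) {p : C →+* B}
    (hp : Surjective p) (hker : IsNilpotent (RingHom.ker p)) {s : A →+* C} {q : A' →+* B}
    (h : q.comp f = p.comp s) :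
    ∃! g : A' →+* C, g.comp f = s ∧ p.comp g = q := by
  algebraize [f, s, p.comp s]
  let p' : C →ₐ[A] B := { p with commutes' := fun _ => rfl }
  let q' : A' →ₐ[A] B := { q with commutes' := RingHom.congr_fun h }
  let g := Algebra.FormallySmooth.liftOfSurjective q' p' hp hker
  have hg : p.comp g.toRingHom = q :=
    congrArg AlgHom.toRingHom (Algebra.FormallySmooth.comp_liftOfSurjective q' p' hp hker)
  refine ⟨g.toRingHom, ⟨g.comp_algebraMap, hg⟩, fun g₁ ⟨hgs, hgq⟩ => ?_⟩
  let g₁' : A' →ₐ[A] C := { g₁ with commutes' := RingHom.congr_fun hgs }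
  exact congrArg AlgHom.toRingHom <|
    Algebra.FormallyUnramified.lift_unique_of_ringHom p hker g₁' g (hgq.trans hg.symm)

theorem existsUnique_lift_of_formallyEtale_quotientMap {f : A →+* A'} {K : Ideal A}
    (hf : (Ideal.quotientMap (K.map f) f Ideal.le_comap_map).FormallyEtale) {p : C →+* B}
    (hp : Surjective p) (hker : IsNilpotent (RingHom.ker p)) {s : A →+* C}
    (hs : K ≤ RingHom.ker s) {q : A' →+* B} (h : q.comp f = p.comp s) :
    ∃! g : A' →+* C, g.comp f = s ∧ p.comp g = q := by
  have hq : K.map f ≤ RingHom.ker q :=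
    Ideal.map_le_iff_le_comap.2 fun x hx => by
      simpa [RingHom.mem_ker.1 (hs hx)] using RingHom.congr_fun h x
  obtain ⟨g, ⟨hgs, hgq⟩, huniq⟩ := existsUnique_lift_of_formallyEtale hf hp hker
    (s := Ideal.Quotient.lift K s hs) (q := Ideal.Quotient.lift (K.map f) q hq)
    (Ideal.Quotient.ringHom_ext (RingHom.ext (RingHom.congr_fun h)))
  refine ⟨g.comp (Ideal.Quotient.mk _), ⟨?_, ?_⟩, fun g₁ ⟨hg₁s, hg₁q⟩ => ?_⟩
  · exact RingHom.ext fun x => RingHom.congr_fun hgs (Ideal.Quotient.mk K x)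
  · exact RingHom.ext fun x => RingHom.congr_fun hgq (Ideal.Quotient.mk _ x)
  · have hg₁ : K.map f ≤ RingHom.ker g₁ :=
      Ideal.map_le_iff_le_comap.2 fun x hx => (RingHom.congr_fun hg₁s x).trans (hs hx)
    rw [← huniq (Ideal.Quotient.lift (K.map f) g₁ hg₁)
      ⟨Ideal.Quotient.ringHom_ext (RingHom.ext (RingHom.congr_fun hg₁s)),
        Ideal.Quotient.ringHom_ext (RingHom.ext (RingHom.congr_fun hg₁q))⟩]
    rfl

theorem ker_quotientMap_map {p : C →+* B} (hp : Surjective p) (K : Ideal C) :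
    RingHom.ker (Ideal.quotientMap (K.map p) p Ideal.le_comap_map) =
      (RingHom.ker p).map (Ideal.Quotient.mk K) := by
  refine (Ideal.ker_quotient_lift _ _).trans ?_
  rw [← RingHom.comap_ker, Ideal.mk_ker,
    Ideal.comap_map_of_surjective' p hp, Ideal.map_sup, Ideal.map_quotient_self, bot_sup_eq]

theorem isNilpotent_ker_quotientMap {p : C →+* B} (hp : Surjective p) {K : Ideal C} {k : ℕ}
    (hk : RingHom.ker p ^ k ≤ K) :
    IsNilpotent (RingHom.ker (Ideal.quotientMap (K.map p) p Ideal.le_comap_map)) := by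
  refine ⟨k, le_bot_iff.1 ?_⟩
  rw [ker_quotientMap_map hp, ← Ideal.map_pow, ← Ideal.map_quotient_self K]
  exact Ideal.map_mono hk

/-- Formal étaleness of `A' / Iⁿ A'` over `A / Iⁿ` for every `n ≥ 1`. -/
def IsAdicallyFormallyEtale (I : Ideal A) (f : A →+* A') : Prop :=
  ∀ n : ℕ, 0 < n →
    (Ideal.quotientMap ((I ^ n).map f) f Ideal.le_comap_map).FormallyEtale

theorem map_pow_le_of_ker_pow_le {p : C →+* B} (hp : Surjective p) {J : Ideal C} {k : ℕ}
    (hker : RingHom.ker p ^ k ≤ J) {I : Ideal A} {s : A →+* C} (hs : I.map (p.comp s) ≤ J.map p) :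
    I.map s ^ (1 + k) ≤ J := by
  have hsup : I.map s ≤ J ⊔ RingHom.ker p := by
    rw [← Ideal.comap_map_of_surjective' p hp, ← Ideal.map_le_iff_le_comap, Ideal.map_map]
    exact hs
  calc I.map s ^ (1 + k) ≤ (J ⊔ RingHom.ker p) ^ (1 + k) := Ideal.pow_right_mono hsup _
    _ ≤ J ^ 1 ⊔ RingHom.ker p ^ k := Ideal.sup_pow_add_le_pow_sup_pow
    _ ≤ J := sup_le (pow_one J).le hker

theorem IsAdicallyFormallyEtale.existsUnique_lift_mk {I : Ideal A} {f : A →+* A'}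
    (hf : IsAdicallyFormallyEtale I f) {J : Ideal C} {p : C →+* B} (hp : Surjective p) {k : ℕ}
    (hker : RingHom.ker p ^ k ≤ J) {s : A →+* C} {q : A' →+* B}
    (hq : (I.map f).map q ≤ J.map p) (h : q.comp f = p.comp s) (n : ℕ) :
    ∃! g : A' →+* C ⧸ J ^ n, g.comp f = (Ideal.Quotient.mk (J ^ n)).comp s ∧
      (Ideal.quotientMap ((J ^ n).map p) p Ideal.le_comap_map).comp g =
        (Ideal.Quotient.mk _).comp q := by
  have hker_pow : RingHom.ker p ^ (k * n) ≤ J ^ n :=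
    (pow_mul _ k n).trans_le (Ideal.pow_right_mono hker n)
  -- `s` need not map `I` into `J`, as derivations need not preserve `I`; a power of `I` goes there.
  have hI_pow : I ^ ((1 + k) * n + 1) ≤ RingHom.ker ((Ideal.Quotient.mk (J ^ n)).comp s) := by
    rw [Ideal.map_map, h] at hq
    rw [← RingHom.comap_ker, Ideal.mk_ker, ← Ideal.map_le_iff_le_comap, Ideal.map_pow]
    calc I.map s ^ ((1 + k) * n + 1) ≤ I.map s ^ ((1 + k) * n) :=
          Ideal.pow_le_pow_right (Nat.le_succ _)
      _ = (I.map s ^ (1 + k)) ^ n := pow_mul ..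
      _ ≤ J ^ n := Ideal.pow_right_mono (map_pow_le_of_ker_pow_le hp hker hq) n
  refine existsUnique_lift_of_formallyEtale_quotientMap (hf _ (Nat.succ_pos _))
    (Ideal.quotientMap_surjective hp) (isNilpotent_ker_quotientMap hp hker_pow) hI_pow ?_
  rw [RingHom.comp_assoc, h]
  rfl

theorem IsAdicallyFormallyEtale.existsUnique_lift {I : Ideal A} {f : A →+* A'}
    (hf : IsAdicallyFormallyEtale I f) {J : Ideal C} [IsAdicComplete J C] {p : C →+* B}
    (hp : Surjective p) [IsHausdorff (J.map p) B] {k : ℕ} (hker : RingHom.ker p ^ k ≤ J)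
    {s : A →+* C} {q : A' →+* B} (hq : (I.map f).map q ≤ J.map p) (h : q.comp f = p.comp s) :
    ∃! g : A' →+* C, g.comp f = s ∧ p.comp g = q := by
  choose g hg huniq using hf.existsUnique_lift_mk hp hker hq h
  have hcompat {m n : ℕ} (hmn : m ≤ n) : (Ideal.Quotient.factorPow J hmn).comp (g n) = g m := by
    refine huniq m _ ⟨?_, ?_⟩
    · rw [RingHom.comp_assoc, (hg n).1]
      rfl
    · have hfactor := congrArg
        (Ideal.Quotient.factor (Ideal.map_mono (f := p) (Ideal.pow_le_pow_right hmn))).comp (hg n).2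
      rw [← RingHom.comp_assoc] at hfactor ⊢
      convert! hfactor using 2
      ext
      rfl
  refine ⟨IsAdicComplete.liftRingHom J g hcompat, ⟨?_, ?_⟩, fun g' ⟨hs', hq'⟩ => ?_⟩
  · refine DFunLike.coe_injective (IsHausdorff.funext' J fun n x => ?_)
    simpa using RingHom.congr_fun (hg n).1 x
  · refine DFunLike.coe_injective (IsHausdorff.funext' (J.map p) fun n x => ?_)
    rw [← Ideal.map_pow]
    exact (congrArg _ (IsAdicComplete.mk_liftRingHom J g hcompat n x)).trans
      (RingHom.congr_fun (hg n).2 x)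
  · refine IsAdicComplete.eq_liftRingHom J g hcompat g' fun n => huniq n _ ⟨?_, ?_⟩
    · rw [RingHom.comp_assoc, hs']
    · rw [← hq']
      rfl

end FormallyEtale

section AdicComplete

variable {A : Type*} [CommRing A] (I : Ideal A)

theorem isAdicComplete_of_comp_eq_id {M N : Type*} [AddCommGroup M] [Module A M]
    [AddCommGroup N] [Module A N] [IsAdicComplete I N] {i : M →ₗ[A] N} {r : N →ₗ[A] M}
    (h : r ∘ₗ i = .id) : IsAdicComplete I M := by
  refine AdicCompletion.of_bijective_iff.1 ⟨fun x y hxy => ?_, fun x => ?_⟩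
  · have hi : i x = i y :=
      AdicCompletion.of_injective I N (congrArg (AdicCompletion.map I i) hxy)
    simpa [← LinearMap.comp_apply, h] using congrArg r hi
  · obtain ⟨z, hz⟩ := AdicCompletion.of_surjective I N (AdicCompletion.map I i x)
    refine ⟨r z, ?_⟩
    rw [← AdicCompletion.map_of, hz, AdicCompletion.map_comp_apply, h, AdicCompletion.map_id,
      LinearMap.id_apply]

theorem isAdicComplete_pi {ι : Type*} [Finite ι] (M : ι → Type*)
    [∀ i, AddCommGroup (M i)] [∀ i, Module A (M i)] [∀ i, IsAdicComplete I (M i)] :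
    IsAdicComplete I (∀ i, M i) := by
  cases nonempty_fintype ι
  classical
  have hpi : AdicCompletion.piEquivOfFintype I M ∘ AdicCompletion.of I (∀ i, M i) =
      Pi.map fun i => AdicCompletion.of I (M i) := by
    ext x i : 2
    rw [comp_apply, AdicCompletion.piEquivOfFintype_apply]
    rfl
  rw [← AdicCompletion.of_bijective_iff,
    ← (AdicCompletion.piEquivOfFintype I M).toEquiv.comp_bijective]
  exact hpi ▸ Bijective.piMap fun i => AdicCompletion.of_bijective I (M i)

theorem isAdicComplete_of_finite_of_projective [IsAdicComplete I A] (M : Type*) [AddCommGroup M]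
    [Module A M] [Module.Finite A M] [Module.Projective A M] : IsAdicComplete I M := by
  obtain ⟨n, r, i, -, -, h⟩ := Module.Finite.exists_comp_eq_id_of_projective A M
  have := isAdicComplete_pi I fun _ : Fin n => A
  exact isAdicComplete_of_comp_eq_id I h

end AdicComplete

/-- The twisted dual numbers `A[ω] / (ω² - α ω)`, the analogue of `DualNumber A` for
`α`-derivations. -/
abbrev AlphaDualNumber (A : Type*) [CommRing A] (α : A) : Type _ :=
  QuadraticAlgebra A 0 α

namespace AlphaDualNumber

open QuadraticAlgebra

variable {A : Type*} [CommRing A]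

/-- The projection `A[ω] → A` of the twisted dual numbers, sending `ω` to `0`. -/
def fst (α : A) : AlphaDualNumber A α →+* A where
  toFun := re
  map_one' := re_one
  map_zero' := re_zero
  map_add' := re_add
  map_mul' := by simp

theorem fst_surjective (α : A) : Surjective (fst α) :=
  fun x => ⟨algebraMap A _ x, rfl⟩

theorem ker_fst (α : A) : RingHom.ker (fst α) = Ideal.span {omega} := by
  apply le_antisymm
  · intro z hz
    replace hz : z.re = 0 := hz
    exact Ideal.mem_span_singleton.2 ⟨algebraMap A _ z.im, by ext <;> simp [hz]⟩
  · simp [Ideal.span_le, fst]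

theorem map_fst_map_algebraMap (α : A) (I : Ideal A) :
    (I.map (algebraMap A (AlphaDualNumber A α))).map (fst α) = I :=
  (Ideal.map_map _ _).trans (Ideal.map_id I)

theorem isAdicComplete_map_algebraMap (α : A) (I : Ideal A) [IsAdicComplete I A] :
    IsAdicComplete (I.map (algebraMap A (AlphaDualNumber A α))) (AlphaDualNumber A α) :=
  (IsAdicComplete.map_algebraMap_iff _ _).2 (isAdicComplete_of_finite_of_projective I _)

theorem omega_pow_succ (α : A) (k : ℕ) :
    (omega : AlphaDualNumber A α) ^ (k + 1) = α ^ k • omega := by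
  induction k with
  | zero => simp
  | succ k ih =>
    rw [pow_succ, ih, smul_mul_assoc, omega_mul_omega_eq_add, zero_smul, zero_add, smul_smul,
      ← pow_succ]

theorem exists_ker_fst_pow_le {I : Ideal A} {α : A} (hα : α ∈ I.radical) :
    ∃ k, RingHom.ker (fst α) ^ k ≤ I.map (algebraMap A (AlphaDualNumber A α)) := by
  obtain ⟨k, hk⟩ := hα
  refine ⟨k + 1, ?_⟩
  rw [ker_fst, Ideal.span_singleton_pow, Ideal.span_singleton_le_iff_mem, omega_pow_succ,
    Algebra.smul_def]
  exact Ideal.mul_mem_right _ _ (Ideal.mem_map_of_mem _ hk)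

variable {R A' : Type*} [CommRing R] [CommRing A'] [Algebra R A] [Algebra R A']

/-- The map `A[ω] → A'[ω]` of twisted dual numbers induced by `f : A → A'`, applying `f` to both
coordinates. -/
def map (f : A →ₐ[R] A') (α : A) : AlphaDualNumber A α →ₐ[R] AlphaDualNumber A' (f α) where
  toFun z := ⟨f z.re, f z.im⟩
  map_one' := by ext <;> simp
  map_zero' := by ext <;> simp
  map_add' _ _ := by ext <;> simp
  map_mul' _ _ := by ext <;> simp
  commutes' r := by ext <;> simp [Algebra.algebraMap_eq_smul_one]

theorem existsUnique_lift_of_isAdicallyFormallyEtale {I : Ideal A} {f : A →ₐ[R] A'}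
    (hf : IsAdicallyFormallyEtale I f.toRingHom) [IsAdicComplete (I.map f.toRingHom) A'] {β : A'}
    (hβ : β ∈ (I.map f.toRingHom).radical) {s : A →ₐ[R] AlphaDualNumber A' β}
    (hs : (fst β).comp s.toRingHom = f.toRingHom) :
    ∃! g : A' →ₐ[R] AlphaDualNumber A' β, g.comp f = s ∧ (fst β).comp g.toRingHom = .id A' := by
  have := isAdicComplete_map_algebraMap β (I.map f.toRingHom)
  have hmap := map_fst_map_algebraMap β (I.map f.toRingHom)
  have : IsHausdorff (((I.map f.toRingHom).map (algebraMap A' (AlphaDualNumber A' β))).map (fst β))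
      A' := hmap.symm ▸ inferInstance
  obtain ⟨k, hker⟩ := exists_ker_fst_pow_le hβ
  obtain ⟨g, ⟨hgs, hgid⟩, huniq⟩ := hf.existsUnique_lift (fst_surjective β) hker
    (s := s.toRingHom) (q := .id A') ((Ideal.map_id _).trans hmap.symm).le hs.symm
  refine ⟨{ g with commutes' := fun r => ?_ }, ⟨AlgHom.coe_ringHom_injective hgs, hgid⟩,
    fun g' ⟨hs', hid'⟩ => AlgHom.coe_ringHom_injective
      (huniq g'.toRingHom ⟨congrArg AlgHom.toRingHom hs', hid'⟩)⟩
  calc g (algebraMap R A' r) = g (f (algebraMap R A r)) := by rw [f.commutes]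
    _ = s (algebraMap R A r) := RingHom.congr_fun hgs _
    _ = algebraMap R _ r := s.commutes r

end AlphaDualNumber

namespace AlphaDerivation

open AlphaDualNumber QuadraticAlgebra

variable {R A : Type*} [CommRing R] [CommRing A] [Algebra R A] {α : A}

/-- The section `x ↦ x + ∂(x) ω` of the projection `A[ω] → A` attached to an `α`-derivation `∂`. -/
def toAlgHom (D : AlphaDerivation R A α) : A →ₐ[R] AlphaDualNumber A α :=
  AlgHom.ofLinearMap
    { toFun := fun x => ⟨x, D.toFun x⟩
      map_add' := fun x y => by ext <;> simp [D.map_add']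
      map_smul' := fun r x => by ext <;> simp [D.map_smul'] }
    (by ext <;> simp [D.map_one'])
    (fun x y => by
      ext
      · simp
      · simp only [LinearMap.coe_mk, AddHom.coe_mk, D.leibniz', im_mul]
        ring)

/-- The `α`-derivation `x ↦ im (g x)` attached to a section `g` of the projection `A[ω] → A`. -/
def ofSection (g : A →ₐ[R] AlphaDualNumber A α) (hg : (fst α).comp g.toRingHom = .id A) :
    AlphaDerivation R A α where
  toFun x := (g x).im
  map_add' x y := by simp
  map_smul' r x := by simp
  map_one' := by simp
  leibniz' x y := by
    have hre (z : A) : (g z).re = z := RingHom.congr_fun hg z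
    simp only [map_mul, im_mul, hre]
    ring

theorem toAlgHom_injective : Injective (toAlgHom : AlphaDerivation R A α → _) := by
  rintro ⟨D₁, _⟩ ⟨D₂, _⟩ h
  congr
  ext x
  exact congrArg im (AlgHom.congr_fun h x)

theorem toAlgHom_ofSection (g : A →ₐ[R] AlphaDualNumber A α)
    (hg : (fst α).comp g.toRingHom = .id A) : (ofSection g hg).toAlgHom = g :=
  AlgHom.ext fun x => QuadraticAlgebra.ext (RingHom.congr_fun hg x).symm rfl

theorem toAlgHom_comp_eq_iff {A' : Type*} [CommRing A'] [Algebra R A'] {f : A →ₐ[R] A'}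
    {D : AlphaDerivation R A α} {D' : AlphaDerivation R A' (f α)} :
    D'.toAlgHom.comp f = (map f α).comp D.toAlgHom ↔ ∀ x, D'.toFun (f x) = f (D.toFun x) :=
  ⟨fun h x => congrArg im (AlgHom.congr_fun h x),
    fun h => AlgHom.ext fun x => QuadraticAlgebra.ext rfl (h x)⟩

end AlphaDerivation

theorem alphaDerivation_etale_extension_general {R A A' : Type*}
    [CommRing R] [CommRing A] [CommRing A'] [Algebra R A] [Algebra R A']
    {I : Ideal A} (f : A →ₐ[R] A') (hf : IsAdicallyFormallyEtale I f.toRingHom)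
    (hcomplete : IsAdicComplete (I.map f.toRingHom) A')
    {α : A} (hα : α ∈ I.radical) (D : AlphaDerivation R A α) :
    ∃! D' : AlphaDerivation R A' (f α), ∀ x : A, D'.toFun (f x) = f (D.toFun x) := by
  obtain ⟨g, ⟨hgf, hgid⟩, huniq⟩ :=
    AlphaDualNumber.existsUnique_lift_of_isAdicallyFormallyEtale hf
      (Ideal.map_radical_le f.toRingHom (Ideal.mem_map_of_mem f.toRingHom hα))
      (s := (AlphaDualNumber.map f α).comp D.toAlgHom) rfl
  refine ⟨.ofSection g hgid, AlphaDerivation.toAlgHom_comp_eq_iff.1 ?_,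
    fun D' hD' => AlphaDerivation.toAlgHom_injective ?_⟩
  · rwa [AlphaDerivation.toAlgHom_ofSection]
  · rw [AlphaDerivation.toAlgHom_ofSection]
    exact huniq _ ⟨AlphaDerivation.toAlgHom_comp_eq_iff.2 hD', rfl⟩

/-- Unique extension of an `α`-derivation along an `I`-adically étale map `f : A → A'`
with `A'` `IA'`-adically complete and separated and `α` `I`-adically nilpotent:  there
is a unique `f(α)`-derivation `∂'` of `A'` over `R` with `∂' ∘ f = f ∘ ∂`. -/
theorem alphaDerivation_etale_extension (R : Type*) (A A' : Type u)
    [CommRing R] [CommRing A] [CommRing A'] [Algebra R A] [Algebra R A']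
    (I : Ideal A) (f : A →ₐ[R] A')
    (hetale : ∀ n : ℕ, 0 < n →
      letI : Algebra (A ⧸ I ^ n) (A' ⧸ (I ^ n).map f.toRingHom) :=
        (Ideal.quotientMap ((I ^ n).map f.toRingHom) f.toRingHom
          Ideal.le_comap_map).toAlgebra
      Algebra.Etale (A ⧸ I ^ n) (A' ⧸ (I ^ n).map f.toRingHom))
    (hcomplete : IsAdicComplete (I.map f.toRingHom) A')
    (α : A) (hα : ∀ n : ℕ, ∃ k : ℕ, α ^ k ∈ I ^ n)
    (D : AlphaDerivation R A α) :
    ∃! D' : AlphaDerivation R A' (f α),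
      ∀ x : A, D'.toFun (f x) = f (D.toFun x) :=
  alphaDerivation_etale_extension_general f (fun n hn => (hetale n hn).formallyEtale) hcomplete
    (by simpa [Ideal.mem_radical_iff] using hα 1) D
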